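/- arXiv:2106.11717 — 2 statements merged into one kernel-verified Lean document; each statement's English description precedes it below -/
import Mathlib

section
/- Let N ≥ 1, let X be a nonempty set, let F : X → Fin N → ℝ, and define f(x) = (1/N) Σ_{i=1}^N F(x, i). Let C_1, …, C_K be a partition of {1, …, N} into K nonempty clusters with representatives r_k ∈ C_k, set p_k = |C_k|/N and define f̃(x) = Σ_{k=1}^K p_k F(x, r_k). Let x* ∈ X minimize f over X and x̃* ∈ X minimize f̃ over X, let X̃ ⊆ X contain both x* and x̃*, and suppose D_1, …, D_K ≥ 0 satisfy | (1/|C_k|) Σ_{i ∈ C_k} F(x, i) − F(x, r_k) | ≤ D_k for all x ∈ X̃ and all k. Then the implementation error satisfies |f(x̃*) − f(x*)| ≤ 2 Σ_{k=1}^K p_k D_k. -/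
/-!
On `Xtilde` the two objectives are uniformly close: splitting the average over all scenarios along
the partition, `f x - ftilde x` is the sum over `k` of `|C k| / N` times the discrepancy of
cluster `k`, so `|f x - ftilde x| ≤ ∑ k, p_k D_k =: B`. Hence
`f xtstar ≤ ftilde xtstar + B ≤ ftilde xstar + B ≤ f xstar + 2 B`, while `f xstar ≤ f xtstar`.
-/

/-- if each cluster discrepancy is bounded by `D k` over a set `X̃`
containing the optimal solutions of the original and reduced problems, then the
implementation error is at most `2 ∑ k p_k D_k`. -/
theorem implementation_error_le_two_weighted_discrepancy
    {X : Type*} [Nonempty X] (N K : ℕ) (hN : 1 ≤ N)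
    (F : X → Fin N → ℝ)
    (C : Fin K → Finset (Fin N)) (r : Fin K → Fin N)
    (hne : ∀ k, (C k).Nonempty)
    (hr : ∀ k, r k ∈ C k)
    (hdisj : ∀ k l, k ≠ l → Disjoint (C k) (C l))
    (hcover : Finset.univ.biUnion C = Finset.univ)
    (f ftilde : X → ℝ)
    (hf : ∀ x, f x = (1 / (N : ℝ)) * ∑ i, F x i)
    (hft : ∀ x, ftilde x = ∑ k, (((C k).card : ℝ) / N) * F x (r k))
    (xstar xtstar : X)
    (hxstar : ∀ x, f xstar ≤ f x) (hxtstar : ∀ x, ftilde xtstar ≤ ftilde x)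
    (Xtilde : Set X) (hxs : xstar ∈ Xtilde) (hxts : xtstar ∈ Xtilde)
    (D : Fin K → ℝ) (hD : ∀ k, 0 ≤ D k)
    (hdisc : ∀ x ∈ Xtilde, ∀ k,
      |(1 / ((C k).card : ℝ)) * (∑ i ∈ C k, F x i) - F x (r k)| ≤ D k) :
    |f xtstar - f xstar| ≤ 2 * ∑ k, (((C k).card : ℝ) / N) * D k := by
  have key : ∀ x ∈ Xtilde, |f x - ftilde x| ≤ ∑ k, (((C k).card : ℝ) / N) * D k := by
    intro x hx
    have hsum : ∑ i, F x i = ∑ k, ∑ i ∈ C k, F x i := by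
      rw [← hcover, Finset.sum_biUnion]
      intro k _ l _ hkl
      exact hdisj k l hkl
    have hdiff : f x - ftilde x = ∑ k, (((C k).card : ℝ) / N) *
        ((1 / ((C k).card : ℝ)) * (∑ i ∈ C k, F x i) - F x (r k)) := by
      rw [hf, hft, hsum, Finset.mul_sum, ← Finset.sum_sub_distrib]
      refine Finset.sum_congr rfl fun k _ => ?_
      have hk : ((C k).card : ℝ) ≠ 0 := by exact_mod_cast (hne k).card_pos.ne'
      have hN0 : (N : ℝ) ≠ 0 := by exact_mod_cast (by omega : N ≠ 0)
      field_simp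
    rw [hdiff]
    refine (Finset.abs_sum_le_sum_abs _ _).trans (Finset.sum_le_sum fun k _ => ?_)
    rw [abs_mul, abs_of_nonneg (by positivity : (0 : ℝ) ≤ ((C k).card : ℝ) / N)]
    exact mul_le_mul_of_nonneg_left (hdisc x hx k) (by positivity)
  have h1 := abs_le.mp (key xstar hxs)
  have h2 := abs_le.mp (key xtstar hxts)
  rw [abs_of_nonneg (sub_nonneg.mpr (hxstar xtstar))]
  linarith [hxtstar xstar, h1.1, h2.2]
end

section
/- Let N ≥ 1, let V be an N × N real matrix, and let 1 ≤ K ≤ N. Then the minimum over all partitions of {1, …, N} into K nonempty clusters C_1, …, C_K and choices of representatives r_k ∈ C_k of the clustering discrepancy Σ_{k=1}^K (|C_k|/N) · | V_{r_k, r_k} − (1/|C_k|) Σ_{j ∈ C_k} V_{r_k, j} | equals the optimal value of the mixed-integer program: minimize (1/N) Σ_{j=1}^N t_j over binary variables x_{ij}, u_j ∈ {0,1} and reals t_j ≥ 0 (i, j ∈ {1, …, N}) subject to t_j ≥ Σ_{i=1}^N x_{ij} V_{j,i} − Σ_{i=1}^N x_{ij} V_{j,j} for all j, t_j ≥ Σ_{i=1}^N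 x_{ij} V_{j,j} − Σ_{i=1}^N x_{ij} V_{j,i} for all j, x_{ij} ≤ u_j and x_{jj} = u_j for all i, j, Σ_{j=1}^N x_{ij} = 1 for all i, and Σ_{j=1}^N u_j = K. -/
/-!
The two problems have the same infimum because partitions with representatives are precisely the
binary feasible points `(x, u)` of the program, up to relabelling the clusters: `x i j = 1` says
that `i` lies in the cluster represented by `j`. Multiplying the `k`-th discrepancy term by
`|C k| / N` clears the inner average, and leaves `1 / N` times
`|∑ j ∈ C k, V (r k) j - |C k| * V (r k) (r k)|`, the least value that the constraints allow for
`t (r k)` (`weighted_discrepancy`).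

Hence every partition value is attained in the program, with `t` equal to the absolute values
(`partition_to_mip`), and every feasible point is at least as expensive as the partition it encodes
(`mip_to_partition`). Both value sets are bounded below by `0`, so their infima agree.
-/

/-- Weighting by the cluster size clears the average inside the absolute value. -/
lemma weighted_discrepancy {N : ℕ} (C : Finset (Fin N)) (hC : C.Nonempty) (a : ℝ)
    (f : Fin N → ℝ) :
    ((C.card : ℝ) / N) * |a - (1 / (C.card : ℝ)) * ∑ j ∈ C, f j|
      = (1 / (N : ℝ)) * |∑ j ∈ C, f j - C.card * a| := by
  have hc : (0 : ℝ) < C.card := by exact_mod_cast hC.card_pos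
  have h : ∑ j ∈ C, f j - C.card * a
      = -((C.card : ℝ) * (a - (1 / (C.card : ℝ)) * ∑ j ∈ C, f j)) := by
    field_simp
    ring
  rw [h, abs_neg, abs_mul, abs_of_pos hc]
  ring

lemma sum_binary_mul {N : ℕ} (y f : Fin N → ℝ) (hy : ∀ i, y i = 0 ∨ y i = 1) :
    ∑ i, y i * f i = ∑ i ∈ Finset.univ.filter (fun i => y i = 1), f i := by
  rw [Finset.sum_filter]
  refine Finset.sum_congr rfl fun i _ => ?_
  rcases hy i with h | h <;> simp [h]

lemma binary_row_unique {N : ℕ} (y : Fin N → ℝ) (hy : ∀ j, y j = 0 ∨ y j = 1)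
    (hs : ∑ j, y j = 1) : ∃! j, y j = 1 := by
  have h1 := sum_binary_mul y (fun _ => 1) hy
  simp only [mul_one, hs, Finset.sum_const, nsmul_eq_mul] at h1
  have h2 : (Finset.univ.filter (fun j => y j = 1)).card = 1 := by exact_mod_cast h1.symm
  obtain ⟨j, hj⟩ := Finset.card_eq_one.mp h2
  have hmem : ∀ l, y l = 1 ↔ l = j := fun l => by
    simpa using Finset.ext_iff.mp hj l
  exact ⟨j, (hmem j).2 rfl, fun l hl => (hmem l).1 hl⟩

/-- A partition with representatives gives a feasible point of the program with the same value. -/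
lemma partition_to_mip {N K : ℕ} (V : Matrix (Fin N) (Fin N) ℝ)
    (C : Fin K → Finset (Fin N)) (r : Fin K → Fin N)
    (hr : ∀ k, r k ∈ C k) (hd : ∀ k l, k ≠ l → Disjoint (C k) (C l))
    (hcov : Finset.univ.biUnion C = Finset.univ) :
    ∃ (x : Fin N → Fin N → ℝ) (u : Fin N → ℝ) (t : Fin N → ℝ),
        (∀ i j, x i j = 0 ∨ x i j = 1) ∧
        (∀ j, u j = 0 ∨ u j = 1) ∧
        (∀ j, 0 ≤ t j) ∧
        (∀ j, (∑ i, x i j * V j i) - (∑ i, x i j * V j j) ≤ t j) ∧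
        (∀ j, (∑ i, x i j * V j j) - (∑ i, x i j * V j i) ≤ t j) ∧
        (∀ i j, x i j ≤ u j) ∧
        (∀ j, x j j = u j) ∧
        (∀ i, ∑ j, x i j = 1) ∧
        (∑ j, u j = (K : ℝ)) ∧
        ∑ k, (((C k).card : ℝ) / N) *
          |V (r k) (r k) - (1 / ((C k).card : ℝ)) * ∑ j ∈ C k, V (r k) j|
          = (1 / (N : ℝ)) * ∑ j, t j := by
  have hex : ∀ i, ∃ k, i ∈ C k := fun i => by
    have := Finset.mem_univ i
    rw [← hcov] at this
    simpa using this
  choose κ hκ using hex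
  have hmem : ∀ i k, i ∈ C k ↔ κ i = k := by
    intro i k
    refine ⟨fun h => ?_, fun h => h ▸ hκ i⟩
    by_contra hne
    exact Finset.disjoint_left.mp (hd _ _ hne) (hκ i) h
  have hκr : ∀ k, κ (r k) = k := fun k => (hmem _ _).1 (hr k)
  have hinj : Function.Injective r := Function.LeftInverse.injective hκr
  have hbin : ∀ i j, (if r (κ i) = j then (1 : ℝ) else 0) = 0 ∨
      (if r (κ i) = j then (1 : ℝ) else 0) = 1 := fun i j => by
    split_ifs <;> simp
  refine ⟨fun i j => if r (κ i) = j then 1 else 0, fun j => if r (κ j) = j then 1 else 0,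
    fun j => |∑ i, (if r (κ i) = j then (1 : ℝ) else 0) * V j i
      - ∑ i, (if r (κ i) = j then (1 : ℝ) else 0) * V j j|,
    hbin, fun j => hbin j j, fun j => abs_nonneg _, fun j => le_abs_self _,
    fun j => ?_, fun i j => ?_, fun j => rfl, fun i => ?_, ?_, ?_⟩
  · exact (le_abs_self _).trans_eq (abs_sub_comm _ _)
  · by_cases h : r (κ i) = j
    · subst h
      simp [hκr]
    · simp only [h, if_false]
      split_ifs <;> norm_num
  · simp
  · -- Summing over the fibres of `κ`: each cluster contains exactly one representative.
    rw [← Finset.sum_fiberwise Finset.univ κ]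
    have : ∀ k : Fin K, ∑ j ∈ Finset.univ.filter (fun j => κ j = k),
        (if r (κ j) = j then (1 : ℝ) else 0) = 1 := by
      intro k
      rw [Finset.sum_eq_single_of_mem (r k) (by simp [hκr])]
      · simp [hκr]
      · intro j hj hne
        have hj' : κ j = k := by simpa using hj
        rw [hj', if_neg hne.symm]
    simp [this]
  · rw [Finset.mul_sum]
    refine Finset.sum_of_injOn r hinj.injOn (by simp) ?_ ?_
    · intro j _ hj
      have : ∀ i, r (κ i) ≠ j := fun i h => hj ⟨κ i, by simp, h⟩
      simp [this]
    · intro k _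
      rw [weighted_discrepancy _ ⟨_, hr k⟩]
      have hC : C k = Finset.univ.filter (fun i => κ i = k) := by
        ext i
        simp [hmem]
      simp [hC, hinj.eq_iff, ite_mul, Finset.sum_ite]

/-- Every feasible point of the program encodes a partition whose discrepancy does not exceed the
objective value. -/
lemma mip_to_partition {N K : ℕ} (V : Matrix (Fin N) (Fin N) ℝ)
    (x : Fin N → Fin N → ℝ) (u t : Fin N → ℝ)
    (hx : ∀ i j, x i j = 0 ∨ x i j = 1)
    (hu : ∀ j, u j = 0 ∨ u j = 1)
    (ht : ∀ j, 0 ≤ t j)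
    (h1 : ∀ j, (∑ i, x i j * V j i) - (∑ i, x i j * V j j) ≤ t j)
    (h2 : ∀ j, (∑ i, x i j * V j j) - (∑ i, x i j * V j i) ≤ t j)
    (hxu : ∀ i j, x i j ≤ u j)
    (hd : ∀ j, x j j = u j)
    (hrow : ∀ i, ∑ j, x i j = 1)
    (hK : ∑ j, u j = (K : ℝ)) :
    ∃ (C : Fin K → Finset (Fin N)) (r : Fin K → Fin N),
        (∀ k, (C k).Nonempty) ∧ (∀ k, r k ∈ C k) ∧
        (∀ k l, k ≠ l → Disjoint (C k) (C l)) ∧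
        (Finset.univ.biUnion C = Finset.univ) ∧
        ∑ k, (((C k).card : ℝ) / N) *
          |V (r k) (r k) - (1 / ((C k).card : ℝ)) * ∑ j ∈ C k, V (r k) j|
          ≤ (1 / (N : ℝ)) * ∑ j, t j := by
  have hcard : (Finset.univ.filter (fun j => u j = 1)).card = K := by
    have h := sum_binary_mul u (fun _ => 1) hu
    simp only [mul_one, hK, Finset.sum_const, nsmul_eq_mul] at h
    exact_mod_cast h.symm
  let e := Finset.equivFinOfCardEq hcard
  let r : Fin K → Fin N := fun k => (e.symm k : Fin N)
  have hinj : Function.Injective r := fun k l h => e.symm.injective (Subtype.ext h)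
  have hur : ∀ k, u (r k) = 1 := fun k =>
    (Finset.mem_filter.mp (e.symm k).2).2
  have hsurj : ∀ j, u j = 1 → ∃ k, r k = j := fun j hj =>
    ⟨e ⟨j, by simpa using hj⟩, by simp [r]⟩
  have hself : ∀ k, r k ∈ Finset.univ.filter (fun i => x i (r k) = 1) := fun k => by
    simp [hd, hur]
  refine ⟨fun k => Finset.univ.filter (fun i => x i (r k) = 1), r, fun k => ⟨_, hself k⟩,
    hself, ?_, ?_, ?_⟩
  · intro k l hkl
    refine Finset.disjoint_left.mpr fun i hi hi' => hkl (hinj ?_)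
    exact (binary_row_unique (x i) (hx i) (hrow i)).unique (by simpa using hi) (by simpa using hi')
  · ext i
    simp only [Finset.mem_biUnion, Finset.mem_filter, Finset.mem_univ, true_and, iff_true]
    obtain ⟨j, hj, -⟩ := binary_row_unique (x i) (hx i) (hrow i)
    have huj : u j = 1 := by
      have := hxu i j
      rcases hu j with h | h
      · linarith
      · exact h
    obtain ⟨k, rfl⟩ := hsurj j huj
    exact ⟨k, hj⟩
  · have hterm : ∀ k, |∑ j ∈ Finset.univ.filter (fun i => x i (r k) = 1), V (r k) j
        - (Finset.univ.filter (fun i => x i (r k) = 1)).card * V (r k) (r k)| ≤ t (r k) := by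
      intro k
      have ha := sum_binary_mul (fun i => x i (r k)) (V (r k)) (fun i => hx i _)
      have hb := sum_binary_mul (fun i => x i (r k)) (fun _ => V (r k) (r k)) (fun i => hx i _)
      rw [Finset.sum_const, nsmul_eq_mul] at hb
      rw [← ha, ← hb]
      exact abs_le.mpr ⟨by linarith [h2 (r k)], h1 (r k)⟩
    have hsum : ∑ k, t (r k) ≤ ∑ j, t j := by
      rw [← Finset.sum_image (s := Finset.univ) (g := r) (f := t) hinj.injOn]
      exact Finset.sum_le_sum_of_subset_of_nonneg (Finset.subset_univ _) fun j _ _ => ht j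
    calc _ = ∑ k, (1 / (N : ℝ)) *
          |∑ j ∈ Finset.univ.filter (fun i => x i (r k) = 1), V (r k) j
          - (Finset.univ.filter (fun i => x i (r k) = 1)).card * V (r k) (r k)| :=
          Finset.sum_congr rfl fun k _ => weighted_discrepancy _ ⟨_, hself k⟩ _ _
      _ ≤ ∑ k, (1 / (N : ℝ)) * t (r k) := by
          gcongr with k
          exact hterm k
      _ = (1 / (N : ℝ)) * ∑ k, t (r k) := by rw [Finset.mul_sum]
      _ ≤ _ := by gcongr

/-- Nonemptiness is not needed: if `S` is empty then so is `T`. -/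
lemma sInf_eq_sInf_of_subset_of_dominated {S T : Set ℝ} (hST : S ⊆ T)
    (hTS : ∀ v ∈ T, ∃ w ∈ S, w ≤ v) (hT : BddBelow T) : sInf S = sInf T := by
  rcases S.eq_empty_or_nonempty with rfl | hS
  · have : T = ∅ := Set.eq_empty_of_forall_notMem fun v hv => by
      obtain ⟨w, hw, -⟩ := hTS v hv
      exact hw
    rw [this]
  · refine le_antisymm (le_csInf (hS.mono hST) fun v hv => ?_) (csInf_le_csInf hT hS hST)
    obtain ⟨w, hw, hwv⟩ := hTS v hv
    exact (csInf_le (hT.mono hST) hw).trans hwv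


/-- the minimal clustering discrepancy over all partitions of the `N`
scenarios into `K` nonempty clusters with representatives equals the optimal value
of the mixed-integer program (10)-(14). -/
theorem clustering_discrepancy_eq_mip_value
    (N K : ℕ) (hN : 1 ≤ N) (hK1 : 1 ≤ K) (hKN : K ≤ N)
    (V : Matrix (Fin N) (Fin N) ℝ) :
    sInf { v : ℝ | ∃ (C : Fin K → Finset (Fin N)) (r : Fin K → Fin N),
        (∀ k, (C k).Nonempty) ∧ (∀ k, r k ∈ C k) ∧
        (∀ k l, k ≠ l → Disjoint (C k) (C l)) ∧
        (Finset.univ.biUnion C = Finset.univ) ∧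
        v = ∑ k, (((C k).card : ℝ) / N) *
          |V (r k) (r k) - (1 / ((C k).card : ℝ)) * ∑ j ∈ C k, V (r k) j| }
    = sInf { v : ℝ | ∃ (x : Fin N → Fin N → ℝ) (u : Fin N → ℝ) (t : Fin N → ℝ),
        (∀ i j, x i j = 0 ∨ x i j = 1) ∧
        (∀ j, u j = 0 ∨ u j = 1) ∧
        (∀ j, 0 ≤ t j) ∧
        (∀ j, (∑ i, x i j * V j i) - (∑ i, x i j * V j j) ≤ t j) ∧
        (∀ j, (∑ i, x i j * V j j) - (∑ i, x i j * V j i) ≤ t j) ∧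
        (∀ i j, x i j ≤ u j) ∧
        (∀ j, x j j = u j) ∧
        (∀ i, ∑ j, x i j = 1) ∧
        (∑ j, u j = (K : ℝ)) ∧
        v = (1 / (N : ℝ)) * ∑ j, t j } := by
  apply sInf_eq_sInf_of_subset_of_dominated
  · rintro _ ⟨C, r, -, hr, hd, hcov, rfl⟩
    exact partition_to_mip V C r hr hd hcov
  · rintro _ ⟨x, u, t, hx, hu, ht, h1, h2, hxu, hdiag, hrow, hK, rfl⟩
    obtain ⟨C, r, hne, hr, hd, hcov, hle⟩ :=
      mip_to_partition V x u t hx hu ht h1 h2 hxu hdiag hrow hK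
    exact ⟨_, ⟨C, r, hne, hr, hd, hcov, rfl⟩, hle⟩
  · refine ⟨0, ?_⟩
    rintro _ ⟨x, u, t, -, -, ht, -, -, -, -, -, -, rfl⟩
    exact mul_nonneg (by positivity) (Finset.sum_nonneg fun j _ => ht j)
end
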